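/- arXiv:2307.15657 — 2 statements merged into one kernel-verified Lean document; each statement's English description precedes it below -/
import Mathlib

section
/- Let n be an odd positive integer and k a nonnegative even integer with gcd(n,k)=1. Let F be the finite field of order 3^n, and let d be a positive integer with (3^k+1)·d ≡ 3^n+1 (mod 2(3^n−1)) (i.e., d represents the exponent (3^n+1)/(3^k+1) modulo 3^n−1). Let f : F → F be f(x)=x^d and let Δf : F → F be (Δf)(x)=f(x+1)−f(x). Then for every c ∈ F, the cardinality of the fiber (Δf)^{-1}({c}) equals 1 if c lies in the prime subfield F_3, and equals 1+η(1−c^{3^k+1}) otherwise, where η is the quadratic character of F. In particular, f is almost perfect nonlinear: every fiber of Δf has cardinality at most 2, and Δf has exactly (3^n−3)/2 fibers of cardinality 0, exactly 3 fibers of cardinality 1, and exactly (3^n−3)/2 fibers of cardinality 2. -/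
/-- The arithmetic facts on `F` used in the argument (`Q = 3^k`). -/
structure Setup (F : Type*) [Field F] (Q d : ℕ) : Prop where
  h3 : (3 : F) = 0
  Qodd : Odd Q
  dpos : d ≠ 0
  hadd : ∀ a b : F, (a + b) ^ Q = a ^ Q + b ^ Q
  hB : ∀ y : F, (y ^ (Q + 1)) ^ d = y ^ 2
  dev : Even d
  hA : ∀ x : F, ∃ y e : F, (e = 1 ∨ e = -1) ∧ y ^ 2 = x ^ d ∧ x = e * y ^ (Q + 1)
  hns : ¬ IsSquare (-1 : F)
  hsq : ∀ x : F, IsSquare x ∨ IsSquare (-x)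
  hinj : ∀ z : F, z ≠ 0 → z ^ Q = z → z = 1 ∨ z = -1
  hsurj : ∀ t : F, t ≠ 0 → IsSquare t → ∃ s : F, s ≠ 0 ∧ s ^ Q = t * s

theorem mk_setup (n k : ℕ) (hn : Odd n) (hk : Even k)
    (hgcd : Nat.gcd n k = 1)
    (F : Type*) [Field F] [Fintype F] (hF : Fintype.card F = 3 ^ n)
    (d : ℕ) (hdpos : 0 < d)
    (hd : (3 ^ k + 1) * d ≡ 3 ^ n + 1 [MOD 2 * (3 ^ n - 1)]) : Setup F (3 ^ k) d := by
  have hq4 : 3 ^ n % 4 = 3 := by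
    obtain ⟨m, rfl⟩ := hn
    rw [pow_succ, pow_mul, Nat.mul_mod, Nat.pow_mod]; norm_num
  have hQ4 : 3 ^ k % 4 = 1 := by
    obtain ⟨m, rfl⟩ := hk
    rw [← two_mul, pow_mul, Nat.pow_mod]; norm_num
  have hc : CharP F 3 := by
    have : Fact (Nat.Prime 3) := ⟨Nat.prime_three⟩
    exact charP_of_card_eq_prime_pow hF
  have : Fact (Nat.Prime 3) := ⟨Nat.prime_three⟩
  have h3 : (3 : F) = 0 := by exact_mod_cast CharP.cast_eq_zero F 3
  have hchar : ringChar F ≠ 2 := by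
    rw [ringChar.eq F 3]; norm_num
  have dev : Even d := by
    have h4 : 4 ∣ 2 * (3 ^ n - 1) := by omega
    have h := hd.of_dvd h4
    unfold Nat.ModEq at h
    rw [Nat.mul_mod] at h
    have e1 : (3 ^ k + 1) % 4 = 2 := by omega
    have e2 : (3 ^ n + 1) % 4 = 0 := by omega
    rw [e1, e2] at h
    rw [Nat.even_iff]
    omega
  have hpm : ∀ y : F, y ≠ 0 → y ^ (3 ^ n - 1) = 1 := by
    intro y hy; rw [← hF]; exact FiniteField.pow_card_sub_one_eq_one y hy
  have hB : ∀ y : F, (y ^ (3 ^ k + 1)) ^ d = y ^ 2 := by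
    intro y
    by_cases hy : y = 0
    · subst hy; simp [hdpos.ne']
    rw [← pow_mul]
    have h1 : (3 ^ k + 1) * d ≡ 3 ^ n + 1 [MOD orderOf y] :=
      hd.of_dvd ((orderOf_dvd_of_pow_eq_one (hpm y hy)).trans (dvd_mul_left _ _))
    have h2 : y ^ ((3 ^ k + 1) * d) = y ^ (3 ^ n + 1) := by
      rw [← pow_mod_orderOf y ((3 ^ k + 1) * d), h1, pow_mod_orderOf]
    have : 3 ^ n + 1 = (3 ^ n - 1) + 2 := by omega
    refine h2.trans ?_
    rw [this, pow_add, hpm y hy, one_mul]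
  refine ⟨h3, ?_, hdpos.ne', ?_, hB, dev, ?_, ?_, ?_, ?_, ?_⟩
  · exact Odd.pow (by decide)
  · intro a b; exact add_pow_char_pow a b 3 k
  · intro x
    obtain ⟨m, rfl⟩ := dev
    have h2 : ((x ^ m) ^ (3 ^ k + 1)) ^ 2 = x ^ 2 := by
      rw [← hB x]; ring
    rcases sq_eq_sq_iff_eq_or_eq_neg.mp h2 with h | h
    · exact ⟨x ^ m, 1, Or.inl rfl, by ring, by rw [h]; ring⟩
    · exact ⟨x ^ m, -1, Or.inr rfl, by ring, by rw [h]; ring⟩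
  · rw [FiniteField.isSquare_neg_one_iff, hF]; simp [hq4]
  · intro x
    by_cases hx : x = 0
    · left; subst hx; exact IsSquare.zero
    rw [FiniteField.isSquare_iff hchar hx, FiniteField.isSquare_iff hchar (neg_ne_zero.mpr hx)]
    have hodd : Odd (Fintype.card F / 2) := by
      rw [hF, Nat.odd_iff]; omega
    rw [hodd.neg_pow]
    rcases FiniteField.pow_dichotomy hchar hx with h | h
    · exact Or.inl h
    · right; rw [h]; ring
  · intro z hz h
    have h1 : z ^ (3 ^ k - 1) = 1 := by
      have : z ^ (3 ^ k - 1) * z = 1 * z := by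
        rw [← pow_succ, Nat.sub_add_cancel (Nat.one_le_pow _ _ (by norm_num)), h, one_mul]
      exact mul_right_cancel₀ hz this
    have h2 : orderOf z ∣ 2 := by
      have := Nat.dvd_gcd (orderOf_dvd_of_pow_eq_one (hpm z hz)) (orderOf_dvd_of_pow_eq_one h1)
      rw [Nat.pow_sub_one_gcd_pow_sub_one, hgcd] at this
      simpa using this
    exact sq_eq_sq_iff_eq_or_eq_neg.mp (by rw [orderOf_dvd_iff_pow_eq_one.mp h2, one_pow])
  · rintro t ht ⟨z, rfl⟩
    have hz : z ≠ 0 := by rintro rfl; simp at ht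
    have hb := Nat.gcd_eq_gcd_ab (3 ^ n - 1) (3 ^ k - 1)
    rw [Nat.pow_sub_one_gcd_pow_sub_one, hgcd] at hb
    set a := (3 ^ n - 1).gcdA (3 ^ k - 1)
    set b := (3 ^ n - 1).gcdB (3 ^ k - 1)
    refine ⟨z ^ b, zpow_ne_zero _ hz, ?_⟩
    have e1 : z * z = z ^ (((3 ^ 1 - 1 : ℕ)) : ℤ) := by
      rw [zpow_natCast]; norm_num; ring
    have e2 : (z ^ b) ^ (3 ^ k) = (z ^ b) ^ (3 ^ k - 1) * z ^ b := by
      rw [← pow_succ, Nat.sub_add_cancel (Nat.one_le_pow _ _ (by norm_num))]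
    rw [e1, hb, zpow_add₀ hz, zpow_mul, zpow_natCast, hpm z hz, one_zpow, one_mul, e2,
      mul_comm ((3 ^ k - 1 : ℕ) : ℤ) b, zpow_mul, zpow_natCast]

/-- Parametrization of a point `x` of the fiber over `s * e`. -/
def FibRep {F : Type*} [Field F] (Q : ℕ) (c x τ ε s e : F) : Prop :=
  (τ = 1 ∨ τ = -1) ∧ (ε = 1 ∨ ε = -1) ∧ s * e = c ∧
    x + 1 = ε * ((s ^ Q + e ^ Q) * (s + e)) ∧ x = τ * ε * ((s ^ Q - e ^ Q) * (s - e))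

section
variable {F : Type*} [Field F] {Q d : ℕ}

theorem Setup.hneg (H : Setup F Q d) (a : F) : (-a) ^ Q = -a ^ Q := H.Qodd.neg_pow a

theorem Setup.hsub (H : Setup F Q d) (a b : F) : (a - b) ^ Q = a ^ Q - b ^ Q := by
  rw [sub_eq_add_neg, H.hadd, H.hneg, sub_eq_add_neg]

theorem Setup.hpm (H : Setup F Q d) {x e : F} (he : e = 1 ∨ e = -1) : (e * x) ^ d = x ^ d := by
  rcases he with rfl | rfl
  · rw [one_mul]
  · rw [neg_one_mul, H.dev.neg_pow]

theorem Setup.rep_exists (H : Setup F Q d) {c x : F} (h : (x + 1) ^ d - x ^ d = c) :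
    ∃ τ ε s e : F, FibRep Q c x τ ε s e := by
  obtain ⟨y1, e1, h1, hy1, hx1⟩ := H.hA (x + 1)
  obtain ⟨y0, e0, h0, hy0, hx0⟩ := H.hA x
  refine ⟨e0 * e1, e1, y1 - y0, y1 + y0, ?_, h1, ?_, ?_, ?_⟩
  · rcases h1 with rfl | rfl <;> rcases h0 with rfl | rfl <;> simp
  · rw [← h, ← hy1, ← hy0]; ring
  · rw [hx1, ← H.hadd, ← pow_succ]
    congr 1
    have : y1 - y0 + (y1 + y0) = - y1 := by linear_combination y1 * H.h3
    rw [this, H.Qodd.add_one.neg_pow]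
  · have h2 : e0 * e1 * e1 = e0 := by rcases h1 with rfl | rfl <;> ring
    rw [h2]
    nth_rewrite 1 [hx0]
    rw [← H.hsub, ← pow_succ]
    congr 1
    have : y1 - y0 - (y1 + y0) = y0 := by linear_combination -y0 * H.h3
    rw [this]

theorem Setup.rep_back (H : Setup F Q d) {c x τ ε s e : F} (h : FibRep Q c x τ ε s e) :
    (x + 1) ^ d - x ^ d = c := by
  obtain ⟨ht, he, hc, h1, h0⟩ := h
  have hte : τ * ε = 1 ∨ τ * ε = -1 := by
    rcases ht with rfl | rfl <;> rcases he with rfl | rfl <;> simp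
  rw [h1, H.hpm he, ← H.hadd, ← pow_succ, H.hB]
  rw [h0, H.hpm hte, ← H.hsub, ← pow_succ, H.hB]
  linear_combination hc + s * e * H.h3

theorem FibRep.swap {c x τ ε s e : F} (h : FibRep Q c x τ ε s e) : FibRep Q c x τ ε e s := by
  obtain ⟨ht, he, hc, h1, h0⟩ := h
  exact ⟨ht, he, by rw [← hc]; ring, by rw [h1]; ring, by
    rw [mul_comm] at hc
    refine h0.trans ?_
    ring⟩

theorem Setup.ratio (H : Setup F Q d) {s s' ε : F} (hs : s ≠ 0) (hs' : s' ≠ 0)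
    (he : ε = 1 ∨ ε = -1) (h : s' ^ Q * s = ε * (s ^ Q * s')) :
    ε = 1 ∧ (s' = s ∨ s' = -s) := by
  have hz : (s' / s) ^ Q = ε * (s' / s) := by
    rw [div_pow]
    have := pow_ne_zero Q hs
    field_simp
    linear_combination h
  have hz0 : s' / s ≠ 0 := div_ne_zero hs' hs
  rcases he with rfl | rfl
  · refine ⟨rfl, ?_⟩
    rw [one_mul] at hz
    rcases H.hinj _ hz0 hz with h | h
    · left; exact (div_eq_one_iff_eq hs).mp h
    · right; rw [div_eq_iff hs] at h; rw [h]; ring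
  · exfalso
    obtain ⟨m, hm⟩ := H.Qodd
    apply H.hns
    refine ⟨(s' / s) ^ m, ?_⟩
    apply mul_right_cancel₀ hz0
    rw [← hz, hm]; ring

theorem Setup.norm (H : Setup F Q d) {s s' ε : F} (hs : s ≠ 0) (hs' : s' ≠ 0)
    (he : ε = 1 ∨ ε = -1) (h : s' ^ Q * s' = ε * (s ^ Q * s)) :
    ε = 1 ∧ (s' = s ∨ s' = -s) := by
  rcases he with rfl | rfl
  · refine ⟨rfl, ?_⟩
    rw [one_mul, ← pow_succ, ← pow_succ] at h
    apply sq_eq_sq_iff_eq_or_eq_neg.mp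
    rw [← H.hB, h, H.hB]
  · exfalso
    obtain ⟨m, hm⟩ := H.Qodd
    apply H.hns
    refine ⟨(s' / s) ^ (m + 1), ?_⟩
    rw [div_pow]
    have := pow_ne_zero (m + 1) hs
    field_simp
    rw [hm] at h
    linear_combination -h

theorem Setup.rep_isSquare (H : Setup F Q d) {c x τ ε s e : F} (h : FibRep Q c x τ ε s e) :
    IsSquare (1 - c ^ (Q + 1)) := by
  obtain ⟨ht, he, hc, h1, h0⟩ := h
  have h3 := H.h3
  have hcc : c ^ (Q + 1) = s ^ Q * e ^ Q * (s * e) := by rw [← hc, pow_succ, mul_pow]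
  rw [hcc]
  generalize s ^ Q = S at *
  generalize e ^ Q = E at *
  rcases ht with rfl | rfl
  · refine ⟨s * E - e * S, ?_⟩
    rcases he with rfl | rfl <;> grind
  · refine ⟨s * S - e * E, ?_⟩
    rcases he with rfl | rfl <;> grind

open Classical in
/-- The quantity that determines a representation. -/
noncomputable def FibRep.key (Q : ℕ) (τ ε s e : F) : F := if τ = 1 then ε * (e * s ^ Q) else ε * (s * s ^ Q)

theorem Setup.ne (H : Setup F Q d) : (-1 : F) ≠ 1 := by
  intro h; apply H.hns; rw [h]; exact IsSquare.one

theorem Setup.rep_key (H : Setup F Q d) {c x τ ε s e r : F} (h : FibRep Q c x τ ε s e)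
    (hr : 1 - c ^ (Q + 1) = r * r) :
    ∃ s e, FibRep Q c x τ ε s e ∧ FibRep.key Q τ ε s e = 1 + r := by
  have hsum : FibRep.key Q τ ε s e = 1 + r ∨ FibRep.key Q τ ε e s = 1 + r := by
    obtain ⟨ht, he, hc, h1, h0⟩ := h
    have h3 := H.h3
    have hcc : c ^ (Q + 1) = s ^ Q * e ^ Q * (s * e) := by rw [← hc, pow_succ, mul_pow]
    rw [hcc] at hr
    unfold FibRep.key
    generalize s ^ Q = S at *
    generalize e ^ Q = E at *
    have hne := H.ne
    rcases ht with rfl | rfl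
    · simp only [if_true]
      have h5 : (ε * (e * S) - (1 + r)) * (ε * (s * E) - (1 + r)) = 0 := by
        rcases he with rfl | rfl <;> grind
      rcases mul_eq_zero.mp h5 with h | h
      · left; linear_combination h
      · right; linear_combination h
    · simp only [if_neg hne]
      have h5 : (ε * (s * S) - (1 + r)) * (ε * (e * E) - (1 + r)) = 0 := by
        rcases he with rfl | rfl <;> grind
      rcases mul_eq_zero.mp h5 with h | h
      · left; linear_combination h
      · right; linear_combination h
  rcases hsum with h' | h'
  · exact ⟨s, e, h, h'⟩
  · exact ⟨e, s, h.swap, h'⟩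

theorem Setup.rep_unique (H : Setup F Q d) {c x x' τ ε s e ε' s' e' : F} (hc0 : c ≠ 0)
    (h : FibRep Q c x τ ε s e) (h' : FibRep Q c x' τ ε' s' e')
    (hk : FibRep.key Q τ ε s e = FibRep.key Q τ ε' s' e') : x = x' := by
  obtain ⟨ht, he, hc, h1, h0⟩ := h
  obtain ⟨-, he', hc', h1', h0'⟩ := h'
  have hs : s ≠ 0 := by rintro rfl; apply hc0; rw [← hc, zero_mul]
  have hs' : s' ≠ 0 := by rintro rfl; apply hc0; rw [← hc', zero_mul]
  have hee : ε * ε' = 1 ∨ ε * ε' = -1 := by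
    rcases he with rfl | rfl <;> rcases he' with rfl | rfl <;> simp
  have hε2 : ε * ε = 1 := by rcases he with rfl | rfl <;> ring
  have hε2' : ε' * ε' = 1 := by rcases he' with rfl | rfl <;> ring
  have key : ε * ε' = 1 ∧ (s' = s ∨ s' = -s) := by
    unfold FibRep.key at hk
    rcases ht with rfl | rfl
    · simp only [if_true] at hk
      apply H.ratio hs hs' hee
      generalize s ^ Q = S at *
      generalize s' ^ Q = S' at *
      apply mul_left_cancel₀ hc0
      have a1 : c * (S' * s) = s * s' * (e' * S') := by rw [← hc']; ring
      have a2 : c * (ε * ε' * (S * s')) = ε' * s * s' * (ε * (e * S)) := by rw [← hc]; ring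
      rw [a1, a2, hk]
      linear_combination -(s * s' * e' * S') * hε2'
    · simp only [if_neg H.ne] at hk
      apply H.norm hs hs' hee
      linear_combination -(s' * s' ^ Q) * hε2' - ε' * hk
  obtain ⟨h5, h6⟩ := key
  have h7 : ε' = ε := by linear_combination ε * h5 - ε' * hε2
  rw [h0, h0', h7]
  rcases h6 with rfl | rfl
  · have : e' = e := mul_left_cancel₀ hs (hc'.trans hc.symm)
    rw [this]
  · have : e' = -e := mul_left_cancel₀ hs (by linear_combination -hc' + hc)
    rw [this, H.hneg, H.hneg]; ring

theorem Setup.cpow_ne (H : Setup F Q d) {c : F} (h1 : c ≠ 1) (h2 : c ≠ -1) :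
    c ^ (Q + 1) ≠ 1 := by
  intro h
  have := H.hB c
  rw [h, one_pow] at this
  have h5 : c ^ 2 = 1 ^ 2 := by rw [← this, one_pow]
  rcases sq_eq_sq_iff_eq_or_eq_neg.mp h5 with h | h
  · exact h1 h
  · exact h2 h

theorem Setup.sgn (H : Setup F Q d) (x : F) : ∃ ε : F, (ε = 1 ∨ ε = -1) ∧ IsSquare (ε * x) := by
  rcases H.hsq x with h | h
  · exact ⟨1, Or.inl rfl, by rwa [one_mul]⟩
  · exact ⟨-1, Or.inr rfl, by rwa [neg_one_mul]⟩

theorem Setup.exists_same (H : Setup F Q d) {c r : F} (hc0 : c ≠ 0)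
    (hr : 1 - c ^ (Q + 1) = r * r) : ∃ x ε s e : F, FibRep Q c x 1 ε s e := by
  have hcQ := pow_ne_zero (Q + 1) hc0
  have hr1 : 1 + r ≠ 0 := by
    intro h; apply hcQ; linear_combination -hr + (1 - r) * h
  obtain ⟨ε, he, hsq⟩ := H.sgn ((1 + r) / c)
  have hε : ε * ε = 1 := by rcases he with rfl | rfl <;> ring
  have hε0 : ε ≠ 0 := by rintro rfl; simp at hε
  obtain ⟨s, hs, hsQ⟩ := H.hsurj _ (mul_ne_zero hε0 (div_ne_zero hr1 hc0)) hsq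
  have h3 := H.h3
  refine ⟨1 * ε * ((s ^ Q - (c / s) ^ Q) * (s - c / s)), ε, s, c / s, Or.inl rfl, he, ?_, ?_, rfl⟩
  · field_simp
  · have hE : (c / s) ^ Q = ε * (1 - r) / s := by
      rw [div_pow, hsQ]
      rw [pow_succ] at hr
      rw [div_eq_div_iff (mul_ne_zero (mul_ne_zero hε0 (div_ne_zero hr1 hc0)) hs) hs]
      field_simp
      linear_combination -hr - (1 - r * r) * hε
    rw [hE, hsQ]
    field_simp
    rcases he with rfl | rfl <;> grind

theorem Setup.exists_mixed (H : Setup F Q d) {c r : F} (hc0 : c ≠ 0)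
    (hr : 1 - c ^ (Q + 1) = r * r) : ∃ x ε s e : F, FibRep Q c x (-1) ε s e := by
  have hcQ := pow_ne_zero (Q + 1) hc0
  have hr1 : 1 + r ≠ 0 := by
    intro h; apply hcQ; linear_combination -hr + (1 - r) * h
  obtain ⟨ε, he, z, hz⟩ := H.sgn (1 + r)
  have hε : ε * ε = 1 := by rcases he with rfl | rfl <;> ring
  have hε0 : ε ≠ 0 := by rintro rfl; simp at hε
  have hsQ : (z ^ d) ^ Q * z ^ d = ε * (1 + r) := by
    rw [← pow_succ, ← pow_mul, mul_comm, pow_mul, H.hB, hz]; ring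
  generalize z ^ d = s at hsQ
  have hs : s ≠ 0 := by
    rintro rfl; rw [mul_zero] at hsQ; exact mul_ne_zero hε0 hr1 hsQ.symm
  have h3 := H.h3
  refine ⟨-1 * ε * ((s ^ Q - (c / s) ^ Q) * (s - c / s)), ε, s, c / s, Or.inr rfl, he, ?_, ?_, rfl⟩
  · field_simp
  · have hE : (c / s) ^ Q * (c / s) = ε * (1 - r) := by
      rw [← pow_succ, div_pow, pow_succ s, hsQ]
      rw [div_eq_iff (mul_ne_zero hε0 hr1)]
      linear_combination -hr - (1 - r * r) * hε
    generalize (c / s) ^ Q = E at *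
    generalize c / s = e at *
    generalize s ^ Q = S at *
    rcases he with rfl | rfl <;> grind

theorem Setup.rep_sq (H : Setup F Q d) {c x τ ε s e : F} (h : FibRep Q c x τ ε s e) :
    IsSquare (τ * (x * (x + 1))) := by
  obtain ⟨ht, he, hc, h1, h0⟩ := h
  obtain ⟨m, hm⟩ := H.Qodd.add_one
  refine ⟨(s + e) ^ m * (s - e) ^ m, ?_⟩
  rw [← H.hadd, ← pow_succ, hm] at h1
  rw [← H.hsub, ← pow_succ, hm] at h0
  have hε : ε * ε = 1 := by rcases he with rfl | rfl <;> ring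
  have hτ : τ * τ = 1 := by rcases ht with rfl | rfl <;> ring
  rw [h1]
  nth_rewrite 1 [h0]
  rw [pow_add, pow_add]
  linear_combination ((s + e) ^ m * (s - e) ^ m * ((s + e) ^ m * (s - e) ^ m)) *
    (τ * τ * hε + hτ)

theorem Setup.fiber_two (H : Setup F Q d) {c : F} (hc0 : c ≠ 0) (h1 : c ≠ 1) (h2 : c ≠ -1)
    (hr : IsSquare (1 - c ^ (Q + 1))) :
    ∃ x y : F, x ≠ y ∧ ∀ z : F, (z + 1) ^ d - z ^ d = c ↔ z = x ∨ z = y := by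
  obtain ⟨r, hr⟩ := hr
  obtain ⟨x, ε, s, e, hx⟩ := H.exists_same hc0 hr
  obtain ⟨y, ε', s', e', hy⟩ := H.exists_mixed hc0 hr
  obtain ⟨s, e, hx, kx⟩ := H.rep_key hx hr
  obtain ⟨s', e', hy, ky⟩ := H.rep_key hy hr
  refine ⟨x, y, ?_, ?_⟩
  · rintro rfl
    have hb := H.rep_back hx
    have hx0 : x ≠ 0 := by
      rintro rfl
      apply h1; rw [← hb]; simp [H.dpos]
    have hx1 : x + 1 ≠ 0 := by
      intro h
      apply h2; rw [← hb, h]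
      have : x = -1 := by linear_combination h
      rw [this, H.dev.neg_pow]; simp [H.dpos]
    have q1 := H.rep_sq hx
    have q2 := H.rep_sq hy
    apply H.hns
    have hm := mul_ne_zero hx0 hx1
    have : (-1 : F) = (-1 * (x * (x + 1))) / (1 * (x * (x + 1))) := by
      field_simp
    rw [this]
    exact q2.div q1
  · intro z
    constructor
    · intro hz
      obtain ⟨τ, ε'', s'', e'', hz⟩ := H.rep_exists hz
      obtain ⟨s'', e'', hz, kz⟩ := H.rep_key hz hr
      rcases hz.1 with rfl | rfl
      · left; exact H.rep_unique hc0 hz hx (kz.trans kx.symm)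
      · right; exact H.rep_unique hc0 hz hy (kz.trans ky.symm)
    · rintro (rfl | rfl)
      · exact H.rep_back hx
      · exact H.rep_back hy

theorem Setup.fiber_zero (H : Setup F Q d) (z : F) : (z + 1) ^ d - z ^ d = 0 ↔ z = 1 := by
  have h3 := H.h3
  constructor
  · intro h
    obtain ⟨y1, e1, h1, hy1, hx1⟩ := H.hA (z + 1)
    obtain ⟨y0, e0, h0, hy0, hx0⟩ := H.hA z
    have hy : y1 ^ 2 = y0 ^ 2 := by rw [hy1, hy0]; linear_combination h
    have hyy : y1 ^ (Q + 1) = y0 ^ (Q + 1) := by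
      rcases sq_eq_sq_iff_eq_or_eq_neg.mp hy with h | h
      · rw [h]
      · rw [h, H.Qodd.add_one.neg_pow]
    rw [hyy] at hx1
    generalize y0 ^ (Q + 1) = Y at *
    rcases h1 with rfl | rfl <;> rcases h0 with rfl | rfl <;> grind
  · rintro rfl
    have : (1 + 1 : F) = -1 := by linear_combination h3
    rw [this, H.dev.neg_pow]; simp

theorem Setup.fiber_one (H : Setup F Q d) (z : F) : (z + 1) ^ d - z ^ d = 1 ↔ z = 0 := by
  have h3 := H.h3
  constructor
  · intro h
    obtain ⟨τ, ε, s, e, hz⟩ := H.rep_exists h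
    obtain ⟨s, e, hz, kz⟩ := H.rep_key (r := 0) hz (by simp)
    obtain ⟨ht, he, hc, h1, h0⟩ := hz
    have hs : s ≠ 0 := by rintro rfl; simp at hc
    have hε : ε * ε = 1 := by rcases he with rfl | rfl <;> ring
    have key : ε = 1 ∧ (s = 1 ∨ s = -1) := by
      unfold FibRep.key at kz
      rcases ht with rfl | rfl
      · simp only [if_true] at kz
        apply H.ratio one_ne_zero hs he
        rw [one_pow]
        linear_combination ε * s * kz - s * e * s ^ Q * hε - s ^ Q * hc
      · simp only [if_neg H.ne] at kz
        apply H.norm one_ne_zero hs he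
        rw [one_pow]
        linear_combination ε * kz - s * s ^ Q * hε
    have hse : e = s := by
      rcases key.2 with rfl | rfl
      · linear_combination hc
      · linear_combination -hc
    rw [h0, hse]; ring
  · rintro rfl; simp [H.dpos]

theorem Setup.fiber_neg (H : Setup F Q d) (z : F) : (z + 1) ^ d - z ^ d = -1 ↔ z = -1 := by
  have h := H.fiber_one (-1 - z)
  have e1 : (-1 - z + 1) = -z := by ring
  have e2 : (-1 - z) = -(z + 1) := by ring
  rw [e1, H.dev.neg_pow, e2, H.dev.neg_pow] at h
  constructor
  · intro h'
    have := h.mp (by linear_combination -h')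
    linear_combination -this
  · rintro rfl
    have := h.mpr (by ring)
    linear_combination -this

end

theorem stmt0 (n k : ℕ) (hn : Odd n) (hnpos : 0 < n) (hk : Even k)
    (hgcd : Nat.gcd n k = 1)
    (F : Type*) [Field F] [Fintype F] (hF : Fintype.card F = 3 ^ n)
    (d : ℕ) (hdpos : 0 < d)
    (hd : (3 ^ k + 1) * d ≡ 3 ^ n + 1 [MOD 2 * (3 ^ n - 1)])
    (f : F → F) (hf : ∀ x, f x = x ^ d)
    (Δf : F → F) (hΔ : ∀ x, Δf x = f (x + 1) - f x)
    (η : F → ℤ)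
    (hη : ∀ c : F, c ≠ 0 → (IsSquare c → η c = 1) ∧ (¬ IsSquare c → η c = -1)) :
    (∀ c : F, (c = 0 ∨ c = 1 ∨ c = -1) → Nat.card {x : F // Δf x = c} = 1) ∧
    (∀ c : F, ¬ (c = 0 ∨ c = 1 ∨ c = -1) →
      (Nat.card {x : F // Δf x = c} : ℤ) = 1 + η (1 - c ^ (3 ^ k + 1))) ∧
    (∀ a : F, a ≠ 0 → ∀ b : F, Nat.card {x : F // f (x + a) - f x = b} ≤ 2) ∧
    Nat.card {c : F // Nat.card {x : F // Δf x = c} = 0} = (3 ^ n - 3) / 2 ∧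
    Nat.card {c : F // Nat.card {x : F // Δf x = c} = 1} = 3 ∧
    Nat.card {c : F // Nat.card {x : F // Δf x = c} = 2} = (3 ^ n - 3) / 2 := by
  have H := mk_setup n k hn hk hgcd F hF d hdpos hd
  have hS : ∀ c x : F, Δf x = c ↔ (x + 1) ^ d - x ^ d = c := by
    intro c x; rw [hΔ, hf, hf]
  have h3 := H.h3
  have hone : ∀ c : F, (c = 0 ∨ c = 1 ∨ c = -1) → Nat.card {x : F // Δf x = c} = 1 := by
    intro c hc
    obtain ⟨y, hy⟩ : ∃ y : F, ∀ x, Δf x = c ↔ x = y := by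
      rcases hc with rfl | rfl | rfl
      · exact ⟨1, fun x => (hS _ x).trans (H.fiber_zero x)⟩
      · exact ⟨0, fun x => (hS _ x).trans (H.fiber_one x)⟩
      · exact ⟨-1, fun x => (hS _ x).trans (H.fiber_neg x)⟩
    simp only [hy]
    simp
  have hmain : ∀ c : F, ¬ (c = 0 ∨ c = 1 ∨ c = -1) →
      1 - c ^ (3 ^ k + 1) ≠ 0 ∧
      ((IsSquare (1 - c ^ (3 ^ k + 1)) ∧ Nat.card {x : F // Δf x = c} = 2) ∨
      (¬ IsSquare (1 - c ^ (3 ^ k + 1)) ∧ Nat.card {x : F // Δf x = c} = 0)) := by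
    intro c hc
    push Not at hc
    obtain ⟨c0, c1, c2⟩ := hc
    refine ⟨sub_ne_zero.mpr (H.cpow_ne c1 c2).symm, ?_⟩
    by_cases hsq : IsSquare (1 - c ^ (3 ^ k + 1))
    · left
      refine ⟨hsq, ?_⟩
      obtain ⟨x, y, hxy, h⟩ := H.fiber_two c0 c1 c2 hsq
      simp only [hS, h]
      exact Set.ncard_pair hxy
    · right
      refine ⟨hsq, ?_⟩
      have : IsEmpty {x : F // Δf x = c} := by
        refine ⟨fun ⟨x, hx⟩ => hsq ?_⟩
        obtain ⟨τ, ε, s, e, hz⟩ := H.rep_exists ((hS c x).mp hx)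
        exact H.rep_isSquare hz
      exact Nat.card_of_isEmpty
  have hle : ∀ c : F, Nat.card {x : F // Δf x = c} ≤ 2 := by
    intro c
    by_cases hc : (c = 0 ∨ c = 1 ∨ c = -1)
    · rw [hone c hc]; norm_num
    · rcases (hmain c hc).2 with h | h <;> rw [h.2]
      norm_num
  have h10 : (-1 : F) ≠ 1 := H.ne
  have hN1 : Nat.card {c : F // Nat.card {x : F // Δf x = c} = 1} = 3 := by
    have e : ∀ c : F, Nat.card {x : F // Δf x = c} = 1 ↔ c ∈ ({0, 1, -1} : Set F) := by
      intro c
      simp only [Set.mem_insert_iff, Set.mem_singleton_iff]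
      refine ⟨fun h => ?_, hone c⟩
      by_contra hc
      rcases (hmain c hc).2 with h' | h' <;> omega
    simp only [e]
    refine Set.ncard_eq_three.mpr ⟨0, 1, -1, zero_ne_one, ?_, h10.symm, rfl⟩
    exact (neg_ne_zero.mpr one_ne_zero).symm
  classical
  have hconv : ∀ m : ℕ, Nat.card {c : F // Nat.card {x : F // Δf x = c} = m} =
      ∑ c : F, if Nat.card {x : F // Δf x = c} = m then 1 else 0 := by
    intro m
    rw [Nat.card_eq_fintype_card, Fintype.card_subtype, Finset.card_filter]
  have hT : ∑ c : F, Nat.card {x : F // Δf x = c} = 3 ^ n := by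
    rw [← hF, ← Nat.card_eq_fintype_card, ← Nat.card_congr (Equiv.sigmaFiberEquiv Δf),
      Nat.card_sigma]
  have hsum1 : ∑ c : F, ((if Nat.card {x : F // Δf x = c} = 0 then 1 else 0) +
      (if Nat.card {x : F // Δf x = c} = 1 then 1 else 0) +
      (if Nat.card {x : F // Δf x = c} = 2 then 1 else 0)) = 3 ^ n := by
    rw [← hF, Fintype.card_eq_sum_ones]
    refine Finset.sum_congr rfl fun c _ => ?_
    have := hle c
    generalize Nat.card {x : F // Δf x = c} = N at *
    interval_cases N <;> rfl
  have hsum2 : ∑ c : F, ((if Nat.card {x : F // Δf x = c} = 1 then 1 else 0) +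
      2 * (if Nat.card {x : F // Δf x = c} = 2 then 1 else 0)) = 3 ^ n := by
    rw [← hT]
    refine Finset.sum_congr rfl fun c _ => ?_
    have := hle c
    generalize Nat.card {x : F // Δf x = c} = N at *
    interval_cases N <;> rfl
  rw [Finset.sum_add_distrib, Finset.sum_add_distrib, ← hconv, ← hconv, ← hconv, hN1] at hsum1
  rw [Finset.sum_add_distrib, ← Finset.mul_sum, ← hconv, ← hconv, hN1] at hsum2
  refine ⟨hone, ?_, ?_, by omega, hN1, by omega⟩
  · intro c hc
    obtain ⟨h0, h | h⟩ := hmain c hc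
    · rw [h.2, (hη _ h0).1 h.1]; norm_num
    · rw [h.2, (hη _ h0).2 h.1]; norm_num
  · intro a ha b
    refine le_trans (le_of_eq ?_) (hle (b / a ^ d))
    refine Nat.card_congr ((Equiv.divRight₀ a ha).subtypeEquiv fun x => ?_)
    rw [hS, hf, hf, Equiv.divRight₀_apply]
    have had := pow_ne_zero d ha
    have e1 : x / a + 1 = (x + a) / a := by field_simp
    rw [e1, div_pow, div_pow, ← sub_div, div_left_inj' had]
end

section
/- Let F be the finite field of order q=3^n with n odd, let k be an even nonnegative integer, let d₁=(3^n+1)/2, d₂=(3^k+1)/2, and let f₄ : F → F be f₄(x) = ((x+2)^{d₁}−(x−2)^{d₁})^{d₂} / ((x+2)^{d₂}−(x−2)^{d₂})^{d₁}. Let E be the quadratic extension of F, U_E = {x ∈ E× : x^{3^n} = x^{-1}}, and let η be the extended quadratic character of F (η(0)=0, nonzero squares to 1, nonsquares to −1). Then for every c ∈ F, the cardinality of {x ∈ U_E : f₄(x+x^{-1}) = c} equals 1+η(1−c²). -/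
theorem aux_range {F E : Type*} [Field F] [Fintype F] [Field E] [Algebra F E] (x : E)
    (hx : x ^ Fintype.card F = x) : ∃ t : F, algebraMap F E t = x := by
  classical
  have hp : 1 < Fintype.card F := Fintype.one_lt_card
  have hne := FiniteField.X_pow_card_sub_X_ne_zero E hp
  have hdeg := FiniteField.X_pow_card_sub_X_natDegree_eq E hp
  set P : Polynomial E := Polynomial.X ^ Fintype.card F - Polynomial.X with hP
  have h1 : (Finset.univ.image (algebraMap F E)) ⊆ P.roots.toFinset := by
    intro z hz
    simp only [Finset.mem_image, Finset.mem_univ, true_and] at hz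
    obtain ⟨t, rfl⟩ := hz
    rw [Multiset.mem_toFinset, Polynomial.mem_roots hne]
    simp [hP, ← map_pow, FiniteField.pow_card]
  have h2 : (Finset.univ.image (algebraMap F E)).card = Fintype.card F := by
    rw [Finset.card_image_of_injective _ (algebraMap F E).injective, Finset.card_univ]
  have h3 : P.roots.toFinset.card ≤ Fintype.card F :=
    (Multiset.toFinset_card_le _).trans ((Polynomial.card_roots' P).trans hdeg.le)
  have h4 := Finset.eq_of_subset_of_card_le h1 (h2 ▸ h3)
  have : x ∈ P.roots.toFinset := by
    rw [Multiset.mem_toFinset, Polynomial.mem_roots hne]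
    simp [hP, hx]
  rw [← h4] at this
  simpa using this

theorem aux_d1 (n : ℕ) (hn : Odd n) : 3 ^ n % 8 = 3 := by
  obtain ⟨m, rfl⟩ := hn
  rw [pow_succ, pow_mul]
  simp [Nat.mul_mod, Nat.pow_mod]

theorem aux_d2 (k : ℕ) (hk : Even k) : 3 ^ k % 8 = 1 := by
  obtain ⟨m, rfl⟩ := hk
  rw [← two_mul, pow_mul]
  simp [Nat.pow_mod]

theorem aux_inj {F : Type*} [Field F] [Fintype F] (n k : ℕ) (hn : Odd n) (hk : Even k)
    (hF : Fintype.card F = 3 ^ n) :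
    Function.Injective (fun t : F => t ^ ((3 ^ k + 1) / 2)) := by
  have h8 := aux_d2 k hk
  intro t s hts
  simp only at hts
  set d := (3 ^ k + 1) / 2 with hd
  have hdpos : d ≠ 0 := by omega
  have hdk : 3 ^ k + 1 = 2 * d := by omega
  by_cases hs : s = 0
  · subst hs
    rw [zero_pow hdpos] at hts
    exact pow_eq_zero_iff hdpos |>.1 hts
  have ht : t ≠ 0 := by
    rintro rfl
    rw [zero_pow hdpos] at hts
    exact hs (pow_eq_zero_iff hdpos |>.1 hts.symm)
  set u := t / s with hu
  have hu0 : u ≠ 0 := div_ne_zero ht hs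
  have hud : u ^ d = 1 := by
    rw [hu, div_pow, hts, div_self (pow_ne_zero _ hs)]
  have h1 : u ^ (3 ^ n - 1) = 1 := by rw [← hF]; exact FiniteField.pow_card_sub_one_eq_one u hu0
  have hQ : u ^ (3 ^ k + 1) = 1 := by rw [hdk, mul_comm, pow_mul, hud, one_pow]
  have h2 : u ^ (3 ^ (2 * k) - 1) = 1 := by
    have : 3 ^ (2 * k) - 1 = (3 ^ k + 1) * (3 ^ k - 1) := by
      rw [mul_comm 2 k, pow_mul]
      have := Nat.sq_sub_sq (3 ^ k) 1
      simpa using this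
    rw [this, pow_mul, hQ, one_pow]
  have h3 : u ^ (3 ^ (Nat.gcd (2 * k) n) - 1) = 1 := by
    rw [← Nat.pow_sub_one_gcd_pow_sub_one]
    exact orderOf_dvd_iff_pow_eq_one.1
      (Nat.dvd_gcd (orderOf_dvd_of_pow_eq_one h2) (orderOf_dvd_of_pow_eq_one h1))
  have hg : Nat.gcd (2 * k) n ∣ k := by
    have hc : Nat.Coprime 2 n := (Nat.coprime_two_left).2 hn
    rw [Nat.Coprime.gcd_mul_left_cancel k hc]
    exact Nat.gcd_dvd_left _ _
  have h4 : u ^ (3 ^ k - 1) = 1 := by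
    have : 3 ^ (Nat.gcd (2 * k) n) - 1 ∣ 3 ^ k - 1 := Nat.pow_sub_one_dvd_pow_sub_one 3 hg
    exact orderOf_dvd_iff_pow_eq_one.1 ((orderOf_dvd_of_pow_eq_one h3).trans this)
  have h5 : u ^ 2 = 1 := by
    have : 3 ^ k + 1 = (3 ^ k - 1) + 2 := by omega
    rw [this, pow_add, h4, one_mul] at hQ
    exact hQ
  have h6 : u = 1 := by
    have : d = 2 * (d / 2) + 1 := by omega
    rw [this, pow_succ, pow_mul, h5, one_pow, one_mul] at hud
    exact hud
  rw [hu, div_eq_one_iff_eq hs] at h6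
  exact h6

theorem aux_f {F : Type*} [Field F] [Fintype F] (n k : ℕ) (hn : Odd n) (hk : Even k)
    [CharP F 3] (hF : Fintype.card F = 3 ^ n) (t : F) (ha : t ^ 2 + 1 ≠ 0)
    (d₁ d₂ : ℕ) (hd₁ : d₁ = (3 ^ n + 1) / 2) (hd₂ : d₂ = (3 ^ k + 1) / 2) (y : F)
    (hy : y = t / (t ^ 2 + 1)) :
    ((y + 2) ^ d₁ - (y - 2) ^ d₁) ^ d₂ / ((y + 2) ^ d₂ - (y - 2) ^ d₂) ^ d₁
      = t ^ d₂ / ((t ^ d₂) ^ 2 + 1) ^ d₁ := by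
  have : Fact (Nat.Prime 3) := ⟨Nat.prime_three⟩
  have h3 : (3 : F) = 0 := by exact_mod_cast CharP.cast_eq_zero F 3
  have hm1 := aux_d1 n hn
  have hm2 := aux_d2 k hk
  have e1 : Even d₁ := by rw [Nat.even_iff]; omega
  have o2 : Odd d₂ := by rw [Nat.odd_iff]; omega
  have hd1' : 2 * d₁ = 3 ^ n + 1 := by omega
  have hd2' : 2 * d₂ = 3 ^ k + 1 := by omega
  set a := t ^ 2 + 1 with hadef
  have y1 : y + 2 = - ((t + 1) ^ 2 / a) := by
    rw [hy]; field_simp; rw [hadef]; linear_combination (t ^ 2 + t + 1) * h3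
  have y2 : y - 2 = (t - 1) ^ 2 / a := by
    rw [hy]; field_simp; rw [hadef]; linear_combination (- t ^ 2 + t - 1) * h3
  have A : (y + 2) ^ d₁ - (y - 2) ^ d₁ = t / a ^ d₁ := by
    rw [y1, y2, e1.neg_pow, div_pow, div_pow, ← pow_mul, ← pow_mul, hd1', pow_succ, pow_succ, ← hF,
      FiniteField.pow_card, FiniteField.pow_card, ← sub_div]
    congr 1
    linear_combination t * h3
  have B : (y + 2) ^ d₂ - (y - 2) ^ d₂ = ((t ^ d₂) ^ 2 + 1) / a ^ d₂ := by
    rw [y1, y2, o2.neg_pow, div_pow, div_pow, ← pow_mul, ← pow_mul, ← pow_mul, mul_comm d₂ 2,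
      hd2', pow_succ, pow_succ, pow_succ,
      add_pow_char_pow, sub_pow_char_pow, neg_sub_left, ← add_div, ← neg_div, one_pow]
    congr 1
    linear_combination (- t ^ 3 ^ k * t - 1) * h3
  rw [A, B, div_pow, div_pow, ← pow_mul, ← pow_mul a, mul_comm d₂ d₁]
  have := pow_ne_zero (d₁ * d₂) ha
  by_cases hz : ((t ^ d₂) ^ 2 + 1) ^ d₁ = 0
  · simp [hz]
  field_simp

/-- counting lemma -/
theorem aux_count {F : Type*} [Field F] [Fintype F] (n : ℕ) (hn : Odd n)
    [CharP F 3] (hF : Fintype.card F = 3 ^ n)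
    (hns : ∀ r : F, r ^ 2 + 1 ≠ 0)
    (d₁ : ℕ) (hd₁ : d₁ = (3 ^ n + 1) / 2)
    (η : F → ℤ) (hη0 : η 0 = 0)
    (hη : ∀ c : F, c ≠ 0 → (IsSquare c → η c = 1) ∧ (¬ IsSquare c → η c = -1))
    (c : F) (hc : c ≠ 0) :
    (Set.ncard {r : F | r / (r ^ 2 + 1) ^ d₁ = c} : ℤ) = 1 + η (1 - c ^ 2) := by
  have h3 : (3 : F) = 0 := by exact_mod_cast CharP.cast_eq_zero F 3
  have hm1 := aux_d1 n hn
  have hd1' : 2 * d₁ = 3 ^ n + 1 := by omega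
  have h11 : (1 : F) ≠ -1 := by
    intro h
    apply one_ne_zero (α := F)
    linear_combination h3 - h
  have hpm : ∀ b : F, b ^ d₁ = b ∨ b ^ d₁ = - b := by
    intro b
    apply sq_eq_sq_iff_eq_or_eq_neg.1
    rw [← pow_mul, mul_comm, hd1', pow_succ, ← hF, FiniteField.pow_card, sq]
  -- basic consequences
  have key : ∀ r : F, (r / (r ^ 2 + 1) ^ d₁ = c ∨ r / (r ^ 2 + 1) ^ d₁ = - c) ↔
      (r = c * (r ^ 2 + 1) ∨ r = - c * (r ^ 2 + 1)) := by
    intro r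
    have h0 := hns r
    rcases hpm (r ^ 2 + 1) with h | h <;> rw [h]
    · rw [div_eq_iff h0, div_eq_iff h0]
    · rw [div_eq_iff (neg_ne_zero.2 h0), div_eq_iff (neg_ne_zero.2 h0)]
      rw [or_comm, neg_mul_neg, mul_neg, neg_mul]
  have hneg : ∀ r : F, (-r) / ((-r) ^ 2 + 1) ^ d₁ = - (r / (r ^ 2 + 1) ^ d₁) := by
    intro r; rw [neg_sq, neg_div]
  have hinv : ∀ r : F, r ≠ 0 → r⁻¹ / (r⁻¹ ^ 2 + 1) ^ d₁ = r / (r ^ 2 + 1) ^ d₁ := by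
    intro r hr
    have : r⁻¹ ^ 2 + 1 = (r ^ 2 + 1) / r ^ 2 := by field_simp; ring
    rw [this, div_pow, ← pow_mul r, hd1', pow_succ _ (3 ^ n), ← hF, FiniteField.pow_card]
    have := pow_ne_zero d₁ (hns r)
    field_simp
  have hcc : c ≠ -c := by
    intro h
    apply hc
    linear_combination c * h3 - h
  by_cases h0 : 1 - c ^ 2 = 0
  · rw [h0, hη0]
    have hc2 : c ^ 2 = 1 := by linear_combination - h0
    have : {r : F | r / (r ^ 2 + 1) ^ d₁ = c} = {c} := by
      have hgc : c / (c ^ 2 + 1) ^ d₁ = c := by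
        have he : Even d₁ := by rw [Nat.even_iff]; omega
        have : c ^ 2 + 1 = -1 := by rw [hc2]; linear_combination h3
        rw [this, he.neg_pow, one_pow, div_one]
      ext r
      simp only [Set.mem_ofPred_eq, Set.mem_singleton_iff]
      constructor
      · intro h
        have hr : r = c ∨ r = - c := by
          rcases (key r).1 (Or.inl h) with h' | h'
          · right
            have : (r + c) ^ 2 = 0 := by
              linear_combination (-c) * h' + r ^ 2 * h0 + c*r*h3
            have := pow_eq_zero_iff (two_ne_zero) |>.1 this
            linear_combination this
          · left
            have : (r - c) ^ 2 = 0 := by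
              linear_combination c * h' + r ^ 2 * h0 - c*r*h3
            have := pow_eq_zero_iff (two_ne_zero) |>.1 this
            linear_combination this
        rcases hr with hr | hr
        · exact hr
        · exfalso
          rw [hr, hneg, hgc] at h
          exact hcc h.symm
      · rintro rfl; exact hgc
    rw [this]; simp
  · by_cases hsq : IsSquare (1 - c ^ 2)
    · rw [(hη _ h0).1 hsq]
      obtain ⟨s, hs⟩ := hsq
      have hs0 : s ≠ 0 := by rintro rfl; simp at hs; exact h0 hs
      have hss : s ≠ -s := by
        intro h
        apply hs0
        linear_combination s * h3 - h
      -- roots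
      have hmul : ((1 + s) / c) * ((1 - s) / c) = 1 := by
        field_simp; linear_combination hs
      have hr0 : (1 + s) / c ≠ 0 := left_ne_zero_of_mul_eq_one hmul
      have hrinv : ((1 + s) / c)⁻¹ = (1 - s) / c := inv_eq_of_mul_eq_one_right hmul
      have hg0 : ∀ r : F, (r = c * (r ^ 2 + 1) ∨ r = - c * (r ^ 2 + 1)) ↔
          (r = (1 + s) / c ∨ r = (1 - s) / c ∨ r = - ((1 + s) / c) ∨ r = - ((1 - s) / c)) := by
        intro r
        have e1 : r = - c * (r ^ 2 + 1) ↔ (r = (1 + s) / c ∨ r = (1 - s) / c) := by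
          rw [eq_div_iff hc, eq_div_iff hc]
          have : r * c = 1 + s ∨ r * c = 1 - s ↔ (r * c - (1 + s)) * (r * c - (1 - s)) = 0 := by
            rw [mul_eq_zero, sub_eq_zero, sub_eq_zero]
          rw [this]
          constructor
          · intro h
            linear_combination c * h + hs - r * c * h3
          · intro h
            apply mul_left_cancel₀ hc
            linear_combination h - hs + r * c * h3
        have e2 : r = c * (r ^ 2 + 1) ↔ (r = - ((1 + s) / c) ∨ r = - ((1 - s) / c)) := by
          rw [← neg_div, ← neg_div, eq_div_iff hc, eq_div_iff hc]
          have : r * c = -(1 + s) ∨ r * c = -(1 - s) ↔ (r * c + (1 + s)) * (r * c + (1 - s)) = 0 := by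
            rw [mul_eq_zero, add_eq_zero_iff_eq_neg, add_eq_zero_iff_eq_neg]
          rw [this]
          constructor
          · intro h
            linear_combination (-c) * h + hs + r * c * h3
          · intro h
            apply mul_left_cancel₀ hc
            linear_combination - h + hs + r * c * h3
        rw [e1, e2]; tauto
      set p := (1 + s) / c with hp
      have hpp : p ≠ p⁻¹ := by
        rw [hrinv, hp]
        intro h
        have := (div_left_inj' hc).1 h
        apply hss; linear_combination this
      rw [← hrinv] at hg0
      have fin : ∀ r0 : F, r0 ≠ 0 → r0 ≠ r0⁻¹ → r0 / (r0 ^ 2 + 1) ^ d₁ = c →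
          (∀ r : F, (r = c * (r ^ 2 + 1) ∨ r = - c * (r ^ 2 + 1)) →
            (r = r0 ∨ r = r0⁻¹ ∨ r = - r0 ∨ r = - r0⁻¹)) →
          {r : F | r / (r ^ 2 + 1) ^ d₁ = c} = {r0, r0⁻¹} := by
        intro r0 h00 _ hg hall
        ext r
        simp only [Set.mem_ofPred_eq, Set.mem_insert_iff, Set.mem_singleton_iff]
        constructor
        · intro h
          rcases hall r ((key r).1 (Or.inl h)) with h' | h' | h' | h'
          · exact Or.inl h'
          · exact Or.inr h'
          · exfalso; rw [h', hneg, hg] at h; exact hcc h.symm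
          · exfalso; rw [h', hneg, hinv _ h00, hg] at h; exact hcc h.symm
        · rintro (rfl | rfl)
          · exact hg
          · rw [hinv _ h00, hg]
      rcases (key p).2 ((hg0 p).2 (Or.inl rfl)) with hgp | hgp
      · rw [fin p hr0 hpp hgp (fun r hr => (hg0 r).1 hr), Set.ncard_pair hpp]; norm_num
      · have hpp' : -p ≠ (-p)⁻¹ := by
          rw [inv_neg]; intro h; exact hpp (neg_injective h)
        rw [fin (-p) (neg_ne_zero.2 hr0) hpp' (by rw [hneg, hgp, neg_neg])
          (fun r hr => by
            have := (hg0 r).1 hr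
            rw [inv_neg, neg_neg, neg_neg]; tauto), Set.ncard_pair hpp']; norm_num
    · rw [(hη _ h0).2 hsq]
      have : {r : F | r / (r ^ 2 + 1) ^ d₁ = c} = ∅ := by
        ext r
        simp only [Set.mem_ofPred_eq, Set.mem_empty_iff_false, iff_false]
        intro h
        apply hsq
        rcases (key r).1 (Or.inl h) with h' | h'
        · refine ⟨c * r + 1, ?_⟩
          linear_combination c * h' - c * r * h3
        · refine ⟨c * r - 1, ?_⟩
          linear_combination (-c) * h' + c * r * h3
      rw [this]; simp

theorem stmt18 (n k : ℕ) (hn : Odd n) (hk : Even k)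
    (F E : Type*) [Field F] [Fintype F] [Field E] [Fintype E] [Algebra F E]
    (hF : Fintype.card F = 3 ^ n) (hE : Fintype.card E = Fintype.card F ^ 2)
    (d₁ d₂ : ℕ) (hd₁ : d₁ = (3 ^ n + 1) / 2) (hd₂ : d₂ = (3 ^ k + 1) / 2)
    (f₄ : F → F)
    (hf₄ : ∀ x : F,
      f₄ x = ((x + 2) ^ d₁ - (x - 2) ^ d₁) ^ d₂ / ((x + 2) ^ d₂ - (x - 2) ^ d₂) ^ d₁)
    (η : F → ℤ) (hη0 : η 0 = 0)
    (hη : ∀ c : F, c ≠ 0 → (IsSquare c → η c = 1) ∧ (¬ IsSquare c → η c = -1))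
    (c : F) :
    (Nat.card {x : E // (x ≠ 0 ∧ x ^ (3 ^ n) = x⁻¹) ∧
      ∃ y : F, algebraMap F E y = x + x⁻¹ ∧ f₄ y = c} : ℤ) = 1 + η (1 - c ^ 2) := by
  have : Fact (Nat.Prime 3) := ⟨Nat.prime_three⟩
  have hm1 := aux_d1 n hn
  have hm2 := aux_d2 k hk
  have hn0 : n ≠ 0 := by rintro rfl; simp at hn
  have hchar : CharP F 3 := by
    obtain ⟨p, hp⟩ := CharP.exists F
    obtain ⟨m, hpp, hm⟩ := FiniteField.card F p
    have : p = 3 := by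
      have h : p ∣ 3 ^ n := by
        rw [← hF, hm]; exact dvd_pow_self p m.ne_zero
      exact (Nat.prime_dvd_prime_iff_eq hpp Nat.prime_three).1 (hpp.dvd_of_dvd_pow h)
    exact this ▸ hp
  have hcharE : CharP E 3 := charP_of_injective_algebraMap (algebraMap F E).injective 3
  have h3 : (3 : F) = 0 := by exact_mod_cast CharP.cast_eq_zero F 3
  have h3E : (3 : E) = 0 := by exact_mod_cast CharP.cast_eq_zero E 3
  have hnsF : ∀ r : F, r ^ 2 + 1 ≠ 0 := by
    intro r hr
    have : IsSquare (-1 : F) := ⟨r, by linear_combination -hr⟩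
    rw [FiniteField.isSquare_neg_one_iff, hF] at this
    omega
  obtain ⟨i, hi⟩ : ∃ i : E, i ^ 2 = -1 := by
    have : IsSquare (-1 : E) := by
      rw [FiniteField.isSquare_neg_one_iff, hE, hF]
      have : (3 ^ n) ^ 2 % 4 = 1 := by
        rw [Nat.pow_mod, show 3 ^ n % 4 = 3 by omega]
      omega
    obtain ⟨i, h⟩ := this
    exact ⟨i, by rw [sq, ← h]⟩
  have hi0 : i ≠ 0 := by rintro rfl; norm_num at hi
  have hiq : i ^ (3 ^ n) = - i := by
    have : 3 ^ n = 2 * (2 * (3 ^ n / 4) + 1) + 1 := by omega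
    rw [this, pow_succ, pow_mul, hi, Odd.neg_one_pow ⟨_, rfl⟩]; ring
  have hiinv : i⁻¹ = - i := by
    apply inv_eq_of_mul_eq_one_right; linear_combination -hi
  have hii : i ≠ -i := by
    intro h; apply hi0; linear_combination i * h3E - h
  let ι := algebraMap F E
  have hιq : ∀ t : F, (ι t) ^ (3 ^ n) = ι t := by
    intro t; rw [← map_pow, ← hF, FiniteField.pow_card]
  have hp1 : ∀ t : F, ι t + i ≠ 0 := by
    intro t h
    apply hnsF t
    apply ι.injective
    rw [map_add, map_pow, map_one, map_zero]
    linear_combination (ι t - i) * h + hi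
  have hp2 : ∀ t : F, ι t - i ≠ 0 := by
    intro t h
    apply hnsF t
    apply ι.injective
    rw [map_add, map_pow, map_one, map_zero]
    linear_combination (ι t + i) * h + hi
  let φ : F → E := fun t => i * (ι t - i) / (ι t + i)
  have hφ0 : ∀ t, φ t ≠ 0 := fun t => div_ne_zero (mul_ne_zero hi0 (hp2 t)) (hp1 t)
  have hφinv : ∀ t, (φ t)⁻¹ = - i * (ι t + i) / (ι t - i) := by
    intro t
    simp only [φ]
    rw [inv_div, div_eq_div_iff (mul_ne_zero hi0 (hp2 t)) (hp2 t)]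
    linear_combination (ι t + i) * (ι t - i) * hi
  have hφq : ∀ t, (φ t) ^ (3 ^ n) = (φ t)⁻¹ := by
    intro t
    rw [hφinv]
    simp only [φ]
    rw [div_pow, mul_pow, sub_pow_char_pow, add_pow_char_pow, hιq, hiq]
    ring
  have hφy : ∀ t, ι (t / (t ^ 2 + 1)) = φ t + (φ t)⁻¹ := by
    intro t
    rw [hφinv]
    simp only [φ]
    have h1 := hp1 t
    have h2 := hp2 t
    have h4 : ι t ^ 2 + 1 ≠ 0 := by
      have : ι t ^ 2 + 1 = (ι t + i) * (ι t - i) := by linear_combination hi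
      rw [this]; exact mul_ne_zero h1 h2
    rw [map_div₀, map_add, map_pow, map_one, div_add_div _ _ h1 h2,
      div_eq_div_iff h4 (mul_ne_zero h1 h2)]
    linear_combination (4 * ι t * (ι t ^ 2 + 1) - ι t) * hi - ι t * (ι t ^ 2 + 1) * h3E
  have hφinj : Function.Injective φ := by
    intro t s h
    simp only [φ] at h
    rw [div_eq_div_iff (hp1 t) (hp1 s)] at h
    apply ι.injective
    have h2 : (ι t - ι s) = 0 := by
      linear_combination h + (ι t - ι s) * h3E - 2 * (ι t - ι s) * hi
    linear_combination h2
  have hφi : ∀ t, φ t ≠ i := by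
    intro t h
    simp only [φ] at h
    rw [div_eq_iff (hp1 t)] at h
    have : i = -i := by
      apply mul_left_cancel₀ hi0; linear_combination -h
    exact hii this
  have hφsurj : ∀ x : E, x ≠ 0 → x ^ (3 ^ n) = x⁻¹ → x ≠ i → ∃ t, φ t = x := by
    intro x hx0 hxq hxi
    have hxi' : x - i ≠ 0 := sub_ne_zero.2 hxi
    have hq : (-i * (x + i) / (x - i)) ^ Fintype.card F = -i * (x + i) / (x - i) := by
      have h6 : x⁻¹ + i ≠ 0 := by
        intro h
        apply hxi'
        have : x * (x⁻¹ + i) = 0 := by rw [h, mul_zero]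
        rw [mul_add, mul_inv_cancel₀ hx0] at this
        linear_combination (-i) * this + x * hi
      rw [hF, div_pow, mul_pow, sub_pow_char_pow, add_pow_char_pow, ← hiinv, inv_pow, hiq, hxq,
        inv_neg, hiinv, neg_neg, sub_neg_eq_add, div_eq_div_iff h6 hxi']
      field_simp
      linear_combination 2 * x * hi
    obtain ⟨t, ht⟩ := aux_range (F := F) _ hq
    refine ⟨t, ?_⟩
    simp only [φ]
    rw [div_eq_iff (hp1 t)]
    have ht' : ι t = -i * (x + i) / (x - i) := ht
    rw [ht']
    field_simp
    linear_combination 0 * hi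
  have hfφ : ∀ t : F, f₄ (t / (t ^ 2 + 1)) = t ^ d₂ / ((t ^ d₂) ^ 2 + 1) ^ d₁ := by
    intro t
    rw [hf₄]
    exact aux_f n k hn hk hF t (hnsF t) d₁ d₂ hd₁ hd₂ _ rfl
  have hd₂0 : d₂ ≠ 0 := by omega
  have hf0 : f₄ 0 = 0 := by
    have := hfφ 0
    simpa [hd₂0] using this
  have hcard : ∀ S : Set E, Nat.card S = S.ncard := fun S => rfl
  have hSeq : ∀ x : E, ((x ≠ 0 ∧ x ^ (3 ^ n) = x⁻¹) ∧
      ∃ y : F, algebraMap F E y = x + x⁻¹ ∧ f₄ y = c) ↔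
      ((∃ t : F, t ^ d₂ / ((t ^ d₂) ^ 2 + 1) ^ d₁ = c ∧ φ t = x) ∨ (x = i ∧ c = 0)) := by
    intro x
    constructor
    · rintro ⟨⟨hx0, hxq⟩, y, hy, hyc⟩
      by_cases hxi : x = i
      · right
        refine ⟨hxi, ?_⟩
        have : y = 0 := by
          apply (algebraMap F E).injective
          rw [hy, hxi, hiinv, map_zero]; ring
        rw [← hyc, this, hf0]
      · left
        obtain ⟨t, rfl⟩ := hφsurj x hx0 hxq hxi
        refine ⟨t, ?_, rfl⟩
        rw [← hfφ, ← hyc]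
        congr 1
        apply ι.injective
        rw [hφy]; exact hy.symm
    · rintro (⟨t, ht, rfl⟩ | ⟨rfl, rfl⟩)
      · exact ⟨⟨hφ0 t, hφq t⟩, _, hφy t, by rw [hfφ, ht]⟩
      · exact ⟨⟨hi0, by rw [hiq, hiinv]⟩, 0, by rw [hiinv, map_zero]; ring, hf0⟩
  have hS : Nat.card {x : E // (x ≠ 0 ∧ x ^ (3 ^ n) = x⁻¹) ∧
      ∃ y : F, algebraMap F E y = x + x⁻¹ ∧ f₄ y = c} =
      Set.ncard {x : E | (∃ t : F, t ^ d₂ / ((t ^ d₂) ^ 2 + 1) ^ d₁ = c ∧ φ t = x) ∨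
        (x = i ∧ c = 0)} := by
    rw [← hcard]
    exact Nat.card_congr (Equiv.subtypeEquivRight hSeq)
  rw [hS]
  by_cases hc : c = 0
  · subst hc
    have hφz : φ 0 = -i := by
      simp only [φ, map_zero]
      rw [zero_sub, zero_add, mul_div_right_comm, div_self hi0, one_mul]
    have : {x : E | (∃ t : F, t ^ d₂ / ((t ^ d₂) ^ 2 + 1) ^ d₁ = 0 ∧ φ t = x) ∨
        (x = i ∧ (0 : F) = 0)} = {i, -i} := by
      ext x
      simp only [Set.mem_ofPred_eq, Set.mem_insert_iff, Set.mem_singleton_iff, and_true]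
      constructor
      · rintro (⟨t, ht, rfl⟩ | h)
        · right
          rw [div_eq_zero_iff] at ht
          rcases ht with ht | ht
          · rw [pow_eq_zero_iff hd₂0] at ht
            rw [ht, hφz]
          · exact absurd ht (pow_ne_zero _ (hnsF _))
        · exact Or.inl h
      · rintro (h | h)
        · exact Or.inr h
        · left; exact ⟨0, by simp [hd₂0], by rw [hφz, h]⟩
    rw [this, Set.ncard_pair hii, (hη _ (by simp)).1 (by simp)]; norm_num
  · rw [← aux_count n hn hF hnsF d₁ hd₁ η hη0 hη c hc]
    have e1 : {x : E | (∃ t : F, t ^ d₂ / ((t ^ d₂) ^ 2 + 1) ^ d₁ = c ∧ φ t = x) ∨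
        (x = i ∧ c = 0)} = φ '' {t : F | t ^ d₂ / ((t ^ d₂) ^ 2 + 1) ^ d₁ = c} := by
      ext x
      simp [hc]
    have hinj : Function.Injective (fun t : F => t ^ d₂) := by
      rw [hd₂]; exact aux_inj n k hn hk hF
    have e2 : {r : F | r / (r ^ 2 + 1) ^ d₁ = c} =
        (fun t : F => t ^ d₂) '' {t : F | t ^ d₂ / ((t ^ d₂) ^ 2 + 1) ^ d₁ = c} := by
      ext r
      constructor
      · intro hr
        obtain ⟨t, rfl⟩ := (Finite.injective_iff_surjective.1 hinj) r
        exact ⟨t, hr, rfl⟩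
      · rintro ⟨t, ht, rfl⟩
        exact ht
    rw [e1, e2, Set.ncard_image_of_injective _ hφinj, Set.ncard_image_of_injective _ hinj]
end
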